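/- The coalitional optimal cost is subadditive over disjoint coalitions: if G1 and G2 are disjoint finite sets of households, then c^ResEss(G1 ∪ G2) ≤ c^ResEss(G1) + c^ResEss(G2). Consequently the coalitional game worth υ is superadditive: υ(G1 ∪ G2) ≥ υ(G1) + υ(G2) for disjoint G1, G2. (Concatenating a coalitionally feasible point of G1 with one of G2 yields a coalitionally feasible point of G1 ∪ G2 whose objective is the sum of the two objectives.) -/

import Mathlib

open Finset

/-- Storage recursion: `s 0 = (1-η)·s0 + r 0` and `s t = (1-η)·s (t-1) + r t` for `t ≥ 1`. -/
def StorageRec {T : ℕ} (η s0 : ℝ) (r s : Fin T → ℝ) : Prop :=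
  ∀ t : Fin T,
    s t = (1 - η) * (if _h : (t : ℕ) = 0 then s0
      else s ⟨(t : ℕ) - 1, lt_of_le_of_lt (Nat.sub_le _ _) t.isLt⟩) + r t

/-- Individual feasibility of a triple `(b, r, s)` for household data `(u, w, C, ρ, η, s0)`. -/
def IndivFeasible {T : ℕ} (u w : Fin T → ℝ) (C ρ η s0 : ℝ)
    (b r s : Fin T → ℝ) : Prop :=
  (∀ t, u t - w t - b t + r t ≤ 0) ∧
  (∀ t, 0 ≤ b t) ∧
  (∀ t, |r t| ≤ ρ) ∧
  StorageRec η s0 r s ∧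
  (∀ t, 0 ≤ s t ∧ s t ≤ C)

/-- The individual objective `F(b, r)`. -/
noncomputable def indivObj {T : ℕ} (ξ u w : Fin T → ℝ) (π σ : ℝ)
    (b r : Fin T → ℝ) : ℝ :=
  ∑ t, ξ t * b t + π * ∑ t, |r t| + σ * ∑ t, (b t + w t - u t - r t)

/-- The individual optimal cost: infimum of `F` over individually feasible triples. -/
noncomputable def indivCost {T : ℕ} (ξ u w : Fin T → ℝ) (π σ C ρ η s0 : ℝ) : ℝ :=
  sInf {c : ℝ | ∃ b r s : Fin T → ℝ,
    IndivFeasible u w C ρ η s0 b r s ∧ indivObj ξ u w π σ b r = c}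

/-- Coalitional feasibility for a finite set `G` of households. -/
def CoalFeasible {ι : Type*} {T : ℕ} (u w : ι → Fin T → ℝ) (C ρ η s0 : ι → ℝ)
    (G : Finset ι) (b r s a : ι → Fin T → ℝ) : Prop :=
  (∀ g ∈ G, ∀ t, 0 ≤ b g t) ∧
  (∀ g ∈ G, ∀ t, |r g t| ≤ ρ g) ∧
  (∀ g ∈ G, StorageRec (η g) (s0 g) (r g) (s g)) ∧
  (∀ g ∈ G, ∀ t, 0 ≤ s g t ∧ s g t ≤ C g) ∧
  (∀ g ∈ G, ∀ t, u g t - w g t - b g t + r g t + a g t ≤ 0) ∧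
  (∀ t, ∑ g ∈ G, a g t = 0)

/-- The coalitional objective `F_G`. -/
noncomputable def coalObj {ι : Type*} {T : ℕ} (ξ : Fin T → ℝ) (u w : ι → Fin T → ℝ)
    (π σ τ : ℝ) (G : Finset ι) (b r a : ι → Fin T → ℝ) : ℝ :=
  ∑ g ∈ G, (∑ t, ξ t * b g t + π * ∑ t, |r g t| + τ * ∑ t, |a g t|
    + σ * ∑ t, (b g t + w g t - u g t - a g t - r g t))

/-- The coalitional optimal cost `c^ResEss(G)`: infimum of `F_G` over coalitionally
feasible points. -/
noncomputable def coalCost {ι : Type*} {T : ℕ} (ξ : Fin T → ℝ) (u w : ι → Fin T → ℝ)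
    (C ρ η s0 : ι → ℝ) (π σ τ : ℝ) (G : Finset ι) : ℝ :=
  sInf {c : ℝ | ∃ b r s a : ι → Fin T → ℝ,
    CoalFeasible u w C ρ η s0 G b r s a ∧ coalObj ξ u w π σ τ G b r a = c}

/-!
For a household `g`, exporting the energy `a g` just means facing the demand `u g + a g`. So a
coalitional point consists of individually feasible triples for the shifted demands, coupled only
by `∑ g ∈ G, a g t = 0`. Both this balance and the objective are sums over the households, so
gluing points of disjoint coalitions gives a point of the union whose cost is the sum of the costs.
Passing to infima, the attainable costs are bounded below because all prices are nonnegative, and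
they exist because every household can let its storage drain, cover its net demand from the utility
and exchange nothing.
-/

open scoped Pointwise in
theorem csInf_le_csInf_add_csInf {α : Type*} [AddCommGroup α] [ConditionallyCompleteLattice α]
    [AddLeftMono α] {s t v : Set α} (hs : s.Nonempty) (ht : t.Nonempty) (hv : BddBelow v)
    (hst : s + t ⊆ v) : sInf v ≤ sInf s + sInf t := by
  rw [← sub_le_iff_le_add]
  refine le_csInf hs fun x hx => ?_
  rw [sub_le_comm]
  refine le_csInf ht fun y hy => ?_
  rw [sub_le_iff_le_add']
  exact csInf_le hv (hst (Set.add_mem_add hx hy))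

section Household

variable {T : ℕ} {ξ u w b r s : Fin T → ℝ} {π σ C ρ η s0 : ℝ}

theorem storageRec_zero_geometric (η s0 : ℝ) :
    StorageRec η s0 (0 : Fin T → ℝ) fun t => (1 - η) ^ ((t : ℕ) + 1) * s0 := by
  rintro ⟨_ | n, hn⟩
  · simp
  · simp [pow_succ' _ (n + 1), mul_assoc]

theorem exists_indivFeasible (u w : Fin T → ℝ) (hρ : 0 ≤ ρ) (hη0 : 0 ≤ η) (hη1 : η ≤ 1)
    (hs00 : 0 ≤ s0) (hs0C : s0 ≤ C) : ∃ b r s, IndivFeasible u w C ρ η s0 b r s := by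
  have hkept : 0 ≤ 1 - η := sub_nonneg.2 hη1
  have hpow (n : ℕ) : (1 - η) ^ n ≤ 1 := pow_le_one₀ hkept (sub_le_self 1 hη0)
  refine ⟨(u - w) ⊔ 0, 0, _, fun t => ?_, fun t => le_sup_right, fun t => by simpa using hρ,
    storageRec_zero_geometric η s0, fun t => ⟨mul_nonneg (pow_nonneg hkept _) hs00, ?_⟩⟩
  · simp
  · exact (mul_le_of_le_one_left hs00 (hpow _)).trans hs0C

theorem IndivFeasible.indivObj_nonneg (h : IndivFeasible u w C ρ η s0 b r s)
    (hξ : ∀ t, 0 ≤ ξ t) (hπ : 0 ≤ π) (hσ : 0 ≤ σ) : 0 ≤ indivObj ξ u w π σ b r := by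
  obtain ⟨hdemand, hb, -, -, -⟩ := h
  have hutility : 0 ≤ ∑ t, ξ t * b t := sum_nonneg fun t _ => mul_nonneg (hξ t) (hb t)
  have hwear : 0 ≤ π * ∑ t, |r t| := mul_nonneg hπ (sum_nonneg fun t _ => abs_nonneg _)
  have hsurplus : 0 ≤ σ * ∑ t, (b t + w t - u t - r t) :=
    mul_nonneg hσ (sum_nonneg fun t _ => by linarith [hdemand t])
  exact add_nonneg (add_nonneg hutility hwear) hsurplus

end Household

section Coalition

variable {ι : Type*} {T : ℕ} {ξ : Fin T → ℝ} {u w : ι → Fin T → ℝ} {C ρ η s0 : ι → ℝ}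
  {π σ τ : ℝ} {G G₁ G₂ : Finset ι} {b r s a b' r' s' a' : ι → Fin T → ℝ}

theorem coalFeasible_iff_indivFeasible :
    CoalFeasible u w C ρ η s0 G b r s a ↔
      (∀ g ∈ G, IndivFeasible (u g + a g) (w g) (C g) (ρ g) (η g) (s0 g) (b g) (r g) (s g)) ∧
        ∀ t, ∑ g ∈ G, a g t = 0 := by
  have hshift (g : ι) (t : Fin T) :
      (u g + a g) t - w g t - b g t + r g t = u g t - w g t - b g t + r g t + a g t := by
    simp only [Pi.add_apply]
    ring
  simp only [CoalFeasible, IndivFeasible, hshift]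
  grind

theorem coalObj_eq_sum_indivObj (ξ : Fin T → ℝ) (u w : ι → Fin T → ℝ) (π σ τ : ℝ)
    (G : Finset ι) (b r a : ι → Fin T → ℝ) :
    coalObj ξ u w π σ τ G b r a =
      ∑ g ∈ G, (indivObj ξ (u g + a g) (w g) π σ (b g) (r g) + τ * ∑ t, |a g t|) := by
  refine sum_congr rfl fun g _ => ?_
  simp only [indivObj, Pi.add_apply, ← sub_sub]
  ring

theorem CoalFeasible.coalObj_nonneg (h : CoalFeasible u w C ρ η s0 G b r s a)
    (hξ : ∀ t, 0 ≤ ξ t) (hπ : 0 ≤ π) (hσ : 0 ≤ σ) (hτ : 0 ≤ τ) :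
    0 ≤ coalObj ξ u w π σ τ G b r a := by
  rw [coalObj_eq_sum_indivObj]
  refine sum_nonneg fun g hg => add_nonneg ?_ ?_
  · exact ((coalFeasible_iff_indivFeasible.1 h).1 g hg).indivObj_nonneg hξ hπ hσ
  · exact mul_nonneg hτ (sum_nonneg fun t _ => abs_nonneg _)

theorem CoalFeasible.congr (h : CoalFeasible u w C ρ η s0 G b r s a) (hb : Set.EqOn b' b G)
    (hr : Set.EqOn r' r G) (hs : Set.EqOn s' s G) (ha : Set.EqOn a' a G) :
    CoalFeasible u w C ρ η s0 G b' r' s' a' := by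
  rw [coalFeasible_iff_indivFeasible] at h ⊢
  refine ⟨fun g hg => ?_, fun t => ?_⟩
  · rw [hb hg, hr hg, hs hg, ha hg]
    exact h.1 g hg
  · rw [← h.2 t]
    exact sum_congr rfl fun g hg => congrFun (ha hg) t

theorem coalObj_congr (hb : Set.EqOn b' b G) (hr : Set.EqOn r' r G) (ha : Set.EqOn a' a G) :
    coalObj ξ u w π σ τ G b' r' a' = coalObj ξ u w π σ τ G b r a :=
  sum_congr rfl fun g hg => by rw [hb hg, hr hg, ha hg]

theorem CoalFeasible.union [DecidableEq ι] (h₁ : CoalFeasible u w C ρ η s0 G₁ b r s a)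
    (h₂ : CoalFeasible u w C ρ η s0 G₂ b r s a) (hdisj : Disjoint G₁ G₂) :
    CoalFeasible u w C ρ η s0 (G₁ ∪ G₂) b r s a := by
  rw [coalFeasible_iff_indivFeasible] at h₁ h₂ ⊢
  refine ⟨fun g hg => (mem_union.1 hg).elim (h₁.1 g) (h₂.1 g), fun t => ?_⟩
  rw [sum_union hdisj, h₁.2 t, h₂.2 t, add_zero]

theorem coalObj_union [DecidableEq ι] (hdisj : Disjoint G₁ G₂) :
    coalObj ξ u w π σ τ (G₁ ∪ G₂) b r a =
      coalObj ξ u w π σ τ G₁ b r a + coalObj ξ u w π σ τ G₂ b r a :=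
  sum_union hdisj

/-- The objective values attained at coalitionally feasible points, so that `coalCost` is by
definition the infimum of `coalCosts`. -/
def coalCosts (ξ : Fin T → ℝ) (u w : ι → Fin T → ℝ) (C ρ η s0 : ι → ℝ) (π σ τ : ℝ)
    (G : Finset ι) : Set ℝ :=
  {c | ∃ b r s a : ι → Fin T → ℝ,
    CoalFeasible u w C ρ η s0 G b r s a ∧ coalObj ξ u w π σ τ G b r a = c}

theorem coalCosts_nonempty
    (h : ∀ g ∈ G, ∃ b r s, IndivFeasible (u g) (w g) (C g) (ρ g) (η g) (s0 g) b r s) :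
    (coalCosts ξ u w C ρ η s0 π σ τ G).Nonempty := by
  choose! b r s hfeas using h
  refine ⟨_, b, r, s, 0, coalFeasible_iff_indivFeasible.2 ⟨fun g hg => ?_, fun t => ?_⟩, rfl⟩
  · simpa using hfeas g hg
  · simp

theorem bddBelow_coalCosts (hξ : ∀ t, 0 ≤ ξ t) (hπ : 0 ≤ π) (hσ : 0 ≤ σ) (hτ : 0 ≤ τ) :
    BddBelow (coalCosts ξ u w C ρ η s0 π σ τ G) := by
  refine ⟨0, ?_⟩
  rintro _ ⟨b, r, s, a, h, rfl⟩
  exact h.coalObj_nonneg hξ hπ hσ hτ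

open scoped Pointwise in
theorem coalCosts_add_subset_coalCosts_union [DecidableEq ι] (hdisj : Disjoint G₁ G₂) :
    coalCosts ξ u w C ρ η s0 π σ τ G₁ + coalCosts ξ u w C ρ η s0 π σ τ G₂ ⊆
      coalCosts ξ u w C ρ η s0 π σ τ (G₁ ∪ G₂) := by
  rintro _ ⟨_, ⟨b₁, r₁, s₁, a₁, h₁, rfl⟩, _, ⟨b₂, r₂, s₂, a₂, h₂, rfl⟩, rfl⟩
  let glue (x y : ι → Fin T → ℝ) : ι → Fin T → ℝ := (G₁ : Set ι).piecewise x y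
  have hglue₁ (x y) : Set.EqOn (glue x y) x G₁ := Set.piecewise_eqOn _ x y
  have hglue₂ (x y) : Set.EqOn (glue x y) y G₂ :=
    (Set.piecewise_eqOn_compl _ x y).mono (disjoint_coe.2 hdisj).subset_compl_left
  refine ⟨glue b₁ b₂, glue r₁ r₂, glue s₁ s₂, glue a₁ a₂, CoalFeasible.union ?_ ?_ hdisj, ?_⟩
  · exact h₁.congr (hglue₁ ..) (hglue₁ ..) (hglue₁ ..) (hglue₁ ..)
  · exact h₂.congr (hglue₂ ..) (hglue₂ ..) (hglue₂ ..) (hglue₂ ..)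
  · rw [coalObj_union hdisj, coalObj_congr (hglue₁ ..) (hglue₁ ..) (hglue₁ ..),
      coalObj_congr (hglue₂ ..) (hglue₂ ..) (hglue₂ ..)]

end Coalition

theorem coalCost_subadditive_and_worth_superadditive_general {ι : Type*} [DecidableEq ι] {T : ℕ}
    {ξ : Fin T → ℝ} {u w : ι → Fin T → ℝ} {C ρ η s0 : ι → ℝ} {π σ τ : ℝ} {G₁ G₂ : Finset ι}
    (hne₁ : (coalCosts ξ u w C ρ η s0 π σ τ G₁).Nonempty)
    (hne₂ : (coalCosts ξ u w C ρ η s0 π σ τ G₂).Nonempty)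
    (hbdd : BddBelow (coalCosts ξ u w C ρ η s0 π σ τ (G₁ ∪ G₂))) (hdisj : Disjoint G₁ G₂) :
    coalCost ξ u w C ρ η s0 π σ τ (G₁ ∪ G₂) ≤
      coalCost ξ u w C ρ η s0 π σ τ G₁ + coalCost ξ u w C ρ η s0 π σ τ G₂ ∧
    ((∑ g ∈ G₁, indivCost ξ (u g) (w g) π σ (C g) (ρ g) (η g) (s0 g)) -
        coalCost ξ u w C ρ η s0 π σ τ G₁) +
      ((∑ g ∈ G₂, indivCost ξ (u g) (w g) π σ (C g) (ρ g) (η g) (s0 g)) -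
        coalCost ξ u w C ρ η s0 π σ τ G₂) ≤
    (∑ g ∈ G₁ ∪ G₂, indivCost ξ (u g) (w g) π σ (C g) (ρ g) (η g) (s0 g)) -
      coalCost ξ u w C ρ η s0 π σ τ (G₁ ∪ G₂) := by
  have hsub : coalCost ξ u w C ρ η s0 π σ τ (G₁ ∪ G₂) ≤
      coalCost ξ u w C ρ η s0 π σ τ G₁ + coalCost ξ u w C ρ η s0 π σ τ G₂ :=
    csInf_le_csInf_add_csInf hne₁ hne₂ hbdd (coalCosts_add_subset_coalCosts_union hdisj)
  refine ⟨hsub, ?_⟩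
  rw [sum_union hdisj]
  linarith

/-- The coalitional optimal cost is subadditive over disjoint coalitions, and hence
the worth `υ(G) = Σ_{g∈G} indivCost g − c^ResEss(G)` is superadditive. -/
theorem coalCost_subadditive_and_worth_superadditive {ι : Type*} [DecidableEq ι] {T : ℕ} (hT : 1 ≤ T)
    (ξ : Fin T → ℝ) (u w : ι → Fin T → ℝ) (C ρ η s0 : ι → ℝ) (π σ τ : ℝ)
    (hu : ∀ g t, 0 ≤ u g t) (hw : ∀ g t, 0 ≤ w g t)
    (hC : ∀ g, 0 ≤ C g) (hρ : ∀ g, 0 ≤ ρ g)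
    (hη0 : ∀ g, 0 ≤ η g) (hη1 : ∀ g, η g ≤ 1)
    (hs00 : ∀ g, 0 ≤ s0 g) (hs0C : ∀ g, s0 g ≤ C g)
    (hξ : ∀ t, 0 ≤ ξ t) (hπ : 0 ≤ π) (hσ : 0 ≤ σ) (hτ : 0 ≤ τ)
    (G₁ G₂ : Finset ι) (hdisj : Disjoint G₁ G₂) :
    coalCost ξ u w C ρ η s0 π σ τ (G₁ ∪ G₂) ≤
      coalCost ξ u w C ρ η s0 π σ τ G₁ + coalCost ξ u w C ρ η s0 π σ τ G₂ ∧
    ((∑ g ∈ G₁, indivCost ξ (u g) (w g) π σ (C g) (ρ g) (η g) (s0 g)) -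
        coalCost ξ u w C ρ η s0 π σ τ G₁) +
      ((∑ g ∈ G₂, indivCost ξ (u g) (w g) π σ (C g) (ρ g) (η g) (s0 g)) -
        coalCost ξ u w C ρ η s0 π σ τ G₂) ≤
    (∑ g ∈ G₁ ∪ G₂, indivCost ξ (u g) (w g) π σ (C g) (ρ g) (η g) (s0 g)) -
      coalCost ξ u w C ρ η s0 π σ τ (G₁ ∪ G₂) := by
  have hfeas (g : ι) := exists_indivFeasible (u g) (w g) (hρ g) (hη0 g) (hη1 g) (hs00 g) (hs0C g)
  exact coalCost_subadditive_and_worth_superadditive_general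
    (coalCosts_nonempty fun g _ => hfeas g) (coalCosts_nonempty fun g _ => hfeas g)
    (bddBelow_coalCosts hξ hπ hσ hτ) hdisj
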